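/- arXiv:1105.5022 — 8 statements merged into one kernel-verified Lean document; each statement's English description precedes it below -/
import Mathlib

section
/- The greatest common divisor with the conductor is an invariant of Deligne–Ribet classes: for nonzero integral ideals a, b, f of O_K, if a ~_f b then a + f = b + f (i.e. gcd(a, f) = gcd(b, f) as ideals). -/
open NumberField FractionalIdeal nonZeroDivisors

/-- An element of a number field is totally positive if every real embedding sends it
to a positive real number. -/
def TotallyPositive (K : Type*) [Field K] (x : K) : Prop :=
  ∀ σ : K →+* ℝ, 0 < σ x

/-- The Deligne–Ribet relation `a ~_f b` on (nonzero) integral ideals of `𝓞 K`: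
there is a totally positive `x ∈ K^×` with `x - 1 ∈ f·b⁻¹` and `(x) = a·b⁻¹`. -/
def DRrel (K : Type*) [Field K] [NumberField K] (f a b : Ideal (𝓞 K)) : Prop :=
  ∃ x : K, x ≠ 0 ∧ TotallyPositive K x ∧
    x - 1 ∈ (f : FractionalIdeal (𝓞 K)⁰ K) * (b : FractionalIdeal (𝓞 K)⁰ K)⁻¹ ∧
    spanSingleton (𝓞 K)⁰ x = (a : FractionalIdeal (𝓞 K)⁰ K) * (b : FractionalIdeal (𝓞 K)⁰ K)⁻¹

/-- **Statement 5.** The gcd with the conductor is an invariant of Deligne–Ribet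
classes: if `a ~_f b` then `a + f = b + f` (i.e. `gcd(a,f) = gcd(b,f)` as ideals). -/
theorem DRrel_sup_conductor_eq (K : Type*) [Field K] [NumberField K]
    (a b f : Ideal (𝓞 K)) (ha : a ≠ 0) (hb : b ≠ 0) (hf : f ≠ 0)
    (h : DRrel K f a b) :
    a + f = b + f := by
  obtain ⟨x, -, -, h1, h2⟩ := h
  have hb' : (b : FractionalIdeal (𝓞 K)⁰ K) ≠ 0 := coeIdeal_ne_zero.mpr hb
  have hxa : spanSingleton (𝓞 K)⁰ x * (b : FractionalIdeal (𝓞 K)⁰ K) = a := by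
    rw [h2, mul_assoc, inv_mul_cancel₀ hb', mul_one]
  have key : ∀ β ∈ b, ∃ φ ∈ f, (x - 1) * algebraMap (𝓞 K) K β = algebraMap (𝓞 K) K φ := by
    intro β hβ
    have h3 := mul_mem_mul h1 (mem_coeIdeal_of_mem (𝓞 K)⁰ (P := K) hβ)
    rw [mul_assoc, inv_mul_cancel₀ hb', mul_one, mem_coeIdeal] at h3
    obtain ⟨φ, hφ, e⟩ := h3
    exact ⟨φ, hφ, e.symm⟩
  have hinj : Function.Injective (algebraMap (𝓞 K) K) := IsFractionRing.injective (𝓞 K) K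
  apply le_antisymm
  · refine sup_le (fun α hα => ?_) le_sup_right
    have h3 := mem_coeIdeal_of_mem (𝓞 K)⁰ (P := K) hα
    rw [← hxa, mem_singleton_mul] at h3
    obtain ⟨y, hy, e⟩ := h3
    obtain ⟨β, hβ, rfl⟩ := (mem_coeIdeal _).mp hy
    obtain ⟨φ, hφ, e2⟩ := key β hβ
    have : α = β + φ := hinj (by rw [map_add, ← e2, e]; ring)
    rw [this]
    exact Submodule.add_mem_sup hβ hφ
  · refine sup_le (fun β hβ => ?_) le_sup_right
    have h3 : x * algebraMap (𝓞 K) K β ∈ (a : FractionalIdeal (𝓞 K)⁰ K) := by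
      rw [← hxa, mem_singleton_mul]
      exact ⟨_, mem_coeIdeal_of_mem _ hβ, rfl⟩
    obtain ⟨α, hα, e⟩ := (mem_coeIdeal _).mp h3
    obtain ⟨φ, hφ, e2⟩ := key β hβ
    have : β = α + -φ := hinj (by rw [map_add, map_neg, ← e2, e]; ring)
    rw [this]
    exact Submodule.add_mem_sup hα (neg_mem hφ)
end

section
/- Let d and f be nonzero integral ideals of O_K with d dividing f. If c and b are nonzero integral ideals with c ~_f d·b, then d divides c. Consequently, the (injective) map DR_{f/d} → DR_f sending the class of b to the class of d·b has image exactly the set of ~_f-classes of ideals divisible by d. -/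
open NumberField FractionalIdeal nonZeroDivisors

/-- **Statement 6.** Let `d ∣ f` be nonzero integral ideals. If `c ~_f d·b` then `d ∣ c`.
Consequently the class `[c]_f` lies in the image of the (injective) map
`DR_{f/d} → DR_f`, `[b] ↦ [d·b]`, exactly when `d` divides `c`. -/
theorem DRrel_dvd_of_rel_mul (K : Type*) [Field K] [NumberField K]
    (d f : Ideal (𝓞 K)) (hd : d ≠ 0) (hf : f ≠ 0) (hdf : d ∣ f) :
    (∀ c b : Ideal (𝓞 K), c ≠ 0 → b ≠ 0 → DRrel K f c (d * b) → d ∣ c) ∧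
    (∀ c : Ideal (𝓞 K), c ≠ 0 →
      ((∃ b : Ideal (𝓞 K), b ≠ 0 ∧ DRrel K f c (d * b)) ↔ d ∣ c)) := by
  have hD : (d : FractionalIdeal (𝓞 K)⁰ K) ≠ 0 := coeIdeal_ne_zero.mpr hd
  have key : ∀ c b : Ideal (𝓞 K), c ≠ 0 → b ≠ 0 → DRrel K f c (d * b) → d ∣ c := by
    rintro c b hc hb ⟨x, hx0, -, hx1, hx⟩
    have hB : (b : FractionalIdeal (𝓞 K)⁰ K) ≠ 0 := coeIdeal_ne_zero.mpr hb
    obtain ⟨e, rfl⟩ := hdf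
    have h1 : ((d * e : Ideal (𝓞 K)) : FractionalIdeal (𝓞 K)⁰ K) *
        ((d * b : Ideal (𝓞 K)) : FractionalIdeal (𝓞 K)⁰ K)⁻¹ =
        (e : FractionalIdeal (𝓞 K)⁰ K) * (b : FractionalIdeal (𝓞 K)⁰ K)⁻¹ := by
      rw [coeIdeal_mul, coeIdeal_mul]
      field_simp
    have hle : (e : FractionalIdeal (𝓞 K)⁰ K) * (b : FractionalIdeal (𝓞 K)⁰ K)⁻¹ ≤
        (b : FractionalIdeal (𝓞 K)⁰ K)⁻¹ := by
      calc _ ≤ 1 * (b : FractionalIdeal (𝓞 K)⁰ K)⁻¹ := mul_le_mul_left coeIdeal_le_one _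
        _ = _ := one_mul _
    rw [h1] at hx1
    have hone : (1 : K) ∈ (b : FractionalIdeal (𝓞 K)⁰ K)⁻¹ := by
      rw [mem_inv_iff hB]
      intro y hy
      rw [one_mul]
      exact coeIdeal_le_one hy
    have hxb : x ∈ (b : FractionalIdeal (𝓞 K)⁰ K)⁻¹ := by
      have := Submodule.add_mem (b : FractionalIdeal (𝓞 K)⁰ K)⁻¹.coeToSubmodule (hle hx1) hone
      rwa [sub_add_cancel] at this
    have hs : spanSingleton (𝓞 K)⁰ x ≤ (b : FractionalIdeal (𝓞 K)⁰ K)⁻¹ :=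
      spanSingleton_le_iff_mem.mpr hxb
    rw [Ideal.dvd_iff_le, ← coeIdeal_le_coeIdeal K]
    have hc' : (c : FractionalIdeal (𝓞 K)⁰ K) = spanSingleton (𝓞 K)⁰ x *
        ((b : FractionalIdeal (𝓞 K)⁰ K) * d) := by
      rw [hx, coeIdeal_mul]
      field_simp
    rw [hc']
    calc _ ≤ (b : FractionalIdeal (𝓞 K)⁰ K)⁻¹ * ((b : FractionalIdeal (𝓞 K)⁰ K) * d) :=
          mul_le_mul_left hs _
      _ = d := by field_simp
  refine ⟨key, fun c hc => ⟨fun ⟨b, hb, h⟩ => key c b hc hb h, ?_⟩⟩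
  rintro ⟨b, rfl⟩
  refine ⟨b, right_ne_zero_of_mul hc, 1, one_ne_zero, fun σ => by simp, ?_, ?_⟩
  · rw [sub_self]
    exact zero_mem _
  · rw [mul_inv_cancel₀ (coeIdeal_ne_zero.mpr hc), spanSingleton_one]
end

section
/- Let d, e, f be nonzero integral ideals of O_K with d and e both dividing f, and let c be a nonzero integral ideal. Then there exist nonzero integral ideals a and b with c ~_f d·a and c ~_f e·b if and only if there exists a nonzero integral ideal g with c ~_f lcm(d,e)·g, where lcm(d,e) = d ∩ e is the least common multiple of the ideals d and e. -/
open NumberField FractionalIdeal nonZeroDivisors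

theorem dvd_aux_general {R K : Type*} [CommRing R] [IsDedekindDomain R] [Field K] [Algebra R K]
    [IsFractionRing R K] (d f c b : Ideal R) (hb : b ≠ 0) (hbd : b ≤ d) (hdf : f ≤ d) (x : K)
    (hx1 : x - 1 ∈ (f : FractionalIdeal R⁰ K) * (b : FractionalIdeal R⁰ K)⁻¹)
    (hx2 : spanSingleton R⁰ x = (c : FractionalIdeal R⁰ K) * (b : FractionalIdeal R⁰ K)⁻¹) :
    c ≤ d := by
  have hb' : (b : FractionalIdeal R⁰ K) ≠ 0 := by
    rwa [Ne, coeIdeal_eq_zero]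
  have hc : (c : FractionalIdeal R⁰ K) = spanSingleton R⁰ x * (b : FractionalIdeal R⁰ K) := by
    rw [hx2, mul_assoc, inv_mul_cancel₀ hb', mul_one]
  intro z hz
  have hz' : algebraMap R K z ∈ (c : FractionalIdeal R⁰ K) := mem_coeIdeal_of_mem _ hz
  rw [hc, mem_singleton_mul] at hz'
  obtain ⟨y, hy, hzy⟩ := hz'
  have h1 : (x - 1) * y ∈ (f : FractionalIdeal R⁰ K) := by
    have h0 := mul_mem_mul hx1 hy
    rwa [mul_assoc, inv_mul_cancel₀ hb', mul_one] at h0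
  rw [mem_coeIdeal] at h1 hy
  obtain ⟨u, hu, hu'⟩ := h1
  obtain ⟨v, hv, rfl⟩ := hy
  have h4 : z = u + v := by
    apply IsFractionRing.injective R K
    rw [map_add, hu', hzy]
    ring
  rw [h4]
  exact d.add_mem (hdf hu) (hbd hv)

theorem DRrel_dvd_aux (K : Type*) [Field K] [NumberField K]
    (d f c a : Ideal (𝓞 K)) (hd : d ≠ 0) (ha : a ≠ 0) (hdf : d ∣ f)
    (h : DRrel K f c (d * a)) : d ∣ c := by
  obtain ⟨x, hx0, -, hx1, hx2⟩ := h
  exact Ideal.dvd_iff_le.2 (dvd_aux_general d f c (d * a) (mul_ne_zero hd ha) Ideal.mul_le_left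
    (Ideal.dvd_iff_le.1 hdf) x hx1 hx2)

theorem DRrel_refl_aux (K : Type*) [Field K] [NumberField K]
    (f c : Ideal (𝓞 K)) (hc : c ≠ 0) : DRrel K f c c := by
  refine ⟨1, one_ne_zero, fun σ => by simp, ?_, ?_⟩
  · rw [sub_self]
    exact zero_mem _ 
  · rw [spanSingleton_one, mul_inv_cancel₀]
    rwa [Ne, coeIdeal_eq_zero]

/-- **Statement 7.** For nonzero integral ideals `d, e ∣ f` and nonzero `c`: there are
nonzero `a, b` with `c ~_f d·a` and `c ~_f e·b` iff there is a nonzero `g` with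
`c ~_f lcm(d,e)·g`, where `lcm(d,e) = d ∩ e`. -/
theorem DRrel_lcm_iff (K : Type*) [Field K] [NumberField K]
    (d e f c : Ideal (𝓞 K)) (hd : d ≠ 0) (he : e ≠ 0) (hf : f ≠ 0) (hc : c ≠ 0)
    (hdf : d ∣ f) (hef : e ∣ f) :
    (∃ a b : Ideal (𝓞 K), a ≠ 0 ∧ b ≠ 0 ∧ DRrel K f c (d * a) ∧ DRrel K f c (e * b)) ↔
    (∃ g : Ideal (𝓞 K), g ≠ 0 ∧ DRrel K f c ((d ⊓ e) * g)) := by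
  constructor
  · rintro ⟨a, b, ha, hb, h1, h2⟩
    have hdc := DRrel_dvd_aux K d f c a hd ha hdf h1
    have hec := DRrel_dvd_aux K e f c b he hb hef h2
    have hl : d ⊓ e ∣ c :=
      Ideal.dvd_iff_le.2 (le_inf (Ideal.dvd_iff_le.1 hdc) (Ideal.dvd_iff_le.1 hec))
    obtain ⟨g, rfl⟩ := hl
    exact ⟨g, right_ne_zero_of_mul hc, DRrel_refl_aux K f _ hc⟩
  · rintro ⟨g, hg, h⟩
    have hne : d ⊓ e ≠ 0 := by
      intro h0
      have h5 : d * e ≤ d ⊓ e := Ideal.mul_le_inf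
      rw [h0] at h5
      exact mul_ne_zero hd he (le_bot_iff.1 h5)
    obtain ⟨d', hd'⟩ : d ∣ d ⊓ e := Ideal.dvd_iff_le.2 inf_le_left
    obtain ⟨e', he'⟩ : e ∣ d ⊓ e := Ideal.dvd_iff_le.2 inf_le_right
    refine ⟨d' * g, e' * g, mul_ne_zero ?_ hg, mul_ne_zero ?_ hg, ?_, ?_⟩
    · rintro rfl
      exact hne (by rw [hd', mul_zero])
    · rintro rfl
      exact hne (by rw [he', mul_zero])
    · rwa [← mul_assoc, ← hd']
    · rwa [← mul_assoc, ← he']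
end

section
/- For a nonzero integral ideal f of O_K and a nonzero integral ideal a, the class [a]_f is an invertible element of the monoid DR_f (i.e. there exists a nonzero integral ideal b with a·b ~_f O_K) if and only if a is coprime to f, i.e. a + f = O_K. -/
open NumberField FractionalIdeal nonZeroDivisors

/-- **Statement 8.** For nonzero integral ideals `a, f` of `𝓞 K`, the class `[a]_f` is
invertible in the monoid `DR_f` (i.e. there is a nonzero integral ideal `b` with
`a·b ~_f 𝓞 K`) if and only if `a` is coprime to `f`, i.e. `a + f = 𝓞 K`. -/
theorem DRrel_isUnit_iff_coprime (K : Type*) [Field K] [NumberField K]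
    (a f : Ideal (𝓞 K)) (ha : a ≠ 0) (hf : f ≠ 0) :
    (∃ b : Ideal (𝓞 K), b ≠ 0 ∧ DRrel K f (a * b) 1) ↔ a + f = 1 := by
  constructor
  · rintro ⟨b, hb, x, hx0, hpos, hx1, hx⟩
    have hone : ((1 : Ideal (𝓞 K)) : FractionalIdeal (𝓞 K)⁰ K)⁻¹ = 1 := by
      simp
    rw [hone, mul_one] at hx1 hx
    have hxm : x ∈ ((a * b : Ideal (𝓞 K)) : FractionalIdeal (𝓞 K)⁰ K) := by
      rw [← hx]; exact mem_spanSingleton_self _ x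
    obtain ⟨y, hy, rfl⟩ := (mem_coeIdeal _).1 hxm
    obtain ⟨z, hz, hzy⟩ := (mem_coeIdeal _).1 hx1
    have h1 : z = y - 1 := by
      apply FaithfulSMul.algebraMap_injective (𝓞 K) K
      rw [hzy, map_sub, map_one]
    rw [Ideal.one_eq_top, Ideal.eq_top_iff_one]
    have h2 : (1 : 𝓞 K) = y + (-z) := by rw [h1]; ring
    rw [h2]
    have hya : y ∈ a := (Ideal.mul_le_left : a * b ≤ a) hy
    have hzf : -z ∈ f := neg_mem (show z ∈ f from hz)
    exact Submodule.add_mem_sup hya hzf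
  · intro h
    have key : ∃ y : 𝓞 K, y ≠ 0 ∧ y ∈ a ∧ y - 1 ∈ f := by
      by_cases hf1 : f = ⊤
      · obtain ⟨y, hy, hy0⟩ := Submodule.exists_mem_ne_zero_of_ne_bot ha
        exact ⟨y, hy0, hy, by simp [hf1]⟩
      · have h1 : (1 : 𝓞 K) ∈ a ⊔ f := by
          have : a ⊔ f = 1 := h
          rw [this, Ideal.one_eq_top]; trivial
        obtain ⟨y, hy, z, hz, hyz⟩ := Submodule.mem_sup.1 h1
        refine ⟨y, ?_, hy, ?_⟩
        · rintro rfl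
          apply hf1
          rw [Ideal.eq_top_iff_one, ← hyz, zero_add]
          exact hz
        · have : y - 1 = -z := by rw [← hyz]; ring
          rw [this]
          exact f.neg_mem hz
    obtain ⟨y, hy0, hya, hyf⟩ := key
    have hy2 : y ^ 2 ∈ a := by rw [pow_two]; exact a.mul_mem_left _ hya
    obtain ⟨b, hb⟩ := Ideal.dvd_span_singleton.2 hy2
    have hyK : algebraMap (𝓞 K) K y ≠ 0 := by
      simpa using hy0
    refine ⟨b, ?_, algebraMap (𝓞 K) K (y ^ 2), ?_, ?_, ?_, ?_⟩
    · rintro rfl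
      rw [mul_zero, Ideal.zero_eq_bot, Ideal.span_singleton_eq_bot] at hb
      exact pow_ne_zero 2 hy0 hb
    · rw [map_pow]; exact pow_ne_zero 2 hyK
    · intro σ
      rw [map_pow, map_pow]
      have : σ (algebraMap (𝓞 K) K y) ≠ 0 := (map_ne_zero σ).2 hyK
      positivity
    · have hone : ((1 : Ideal (𝓞 K)) : FractionalIdeal (𝓞 K)⁰ K)⁻¹ = 1 := by
        simp
      rw [hone, mul_one]
      refine (mem_coeIdeal _).2 ⟨y ^ 2 - 1, ?_, by simp⟩
      have : y ^ 2 - 1 = (y + 1) * (y - 1) := by ring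
      rw [this]
      exact f.mul_mem_left _ hyf
    · have hone : ((1 : Ideal (𝓞 K)) : FractionalIdeal (𝓞 K)⁰ K)⁻¹ = 1 := by
        simp
      rw [hone, mul_one, ← hb, coeIdeal_span_singleton]
end

section
/- Let a and f be nonzero integral ideals of O_K that are coprime, i.e. a + f = O_K. Then there exists a totally positive element x ∈ a with x − 1 ∈ f. -/
open NumberField FractionalIdeal nonZeroDivisors

open NumberField in
/-- **Statement 14.** If `a` and `f` are nonzero coprime integral ideals of `𝓞 K`
(i.e. `a + f = 𝓞 K`), then there is a totally positive `x ∈ a` with `x - 1 ∈ f`. -/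
theorem exists_totallyPositive_mem_coprime (K : Type*) [Field K] [NumberField K]
    (a f : Ideal (𝓞 K)) (ha : a ≠ 0) (hf : f ≠ 0) (hco : a + f = 1) :
    ∃ x : 𝓞 K, x ∈ a ∧ TotallyPositive K (algebraMap (𝓞 K) K x) ∧ x - 1 ∈ f := by
  obtain ⟨y, hy, z, hz, hyz⟩ := Submodule.mem_sup.mp
    (show (1 : 𝓞 K) ∈ a ⊔ f by
      rw [← Submodule.add_eq_sup, hco, Ideal.one_eq_top]; trivial)
  obtain ⟨N, hpos, hNa, hNf⟩ : ∃ N : ℕ, 0 < N ∧ (N : 𝓞 K) ∈ a ∧ (N : 𝓞 K) ∈ f := by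
    refine ⟨Ideal.absNorm a * Ideal.absNorm f, ?_, ?_, ?_⟩
    · refine Nat.mul_pos ?_ ?_ <;> rw [Nat.pos_iff_ne_zero, Ne, Ideal.absNorm_eq_zero_iff]
      · exact ha
      · exact hf
    · rw [Nat.cast_mul]
      exact a.mul_mem_right _ (Ideal.absNorm_mem a)
    · rw [Nat.cast_mul]
      exact f.mul_mem_left _ (Ideal.absNorm_mem f)
  refine ⟨y ^ 2 + N, ?_, ?_, ?_⟩
  · exact a.add_mem (Ideal.pow_mem_of_mem a hy 2 (by norm_num)) hNa
  · intro σ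
    simp only [map_add, map_pow, map_natCast]
    have : (0 : ℝ) < N := by exact_mod_cast hpos
    positivity
  · have h : y ^ 2 + (N : 𝓞 K) - 1
        = (-(y + 1)) * z + (N : 𝓞 K) := by
      rw [← eq_sub_iff_add_eq'] at hyz
      rw [hyz]; ring
    rw [h]
    exact f.add_mem (f.mul_mem_left _ hz) hNf
end

section
/- Euler's formula for number fields: for every nonzero integral ideal f of O_K, the absolute norm satisfies N(f) = |O_K/f| = Σ_{d | f} φ_K(d), where the sum ranges over all (finitely many) nonzero integral ideals d dividing f and φ_K(d) = |(O_K/d)^×| is the number of units of the quotient ring O_K/d. -/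
open NumberField

lemma aux_fiber {R : Type*} [CommRing R] [IsDedekindDomain R] (f d e : Ideal R)
    (hf : f ≠ 0) (hde : f = d * e) :
    Nat.card {x : R ⧸ f // Ideal.torsionOf R (R ⧸ f) x = d} = Nat.card ((R ⧸ d)ˣ) := by
  have hd0 : d ≠ 0 := by rintro rfl; simp at hde; exact hf hde
  have he0 : e ≠ 0 := by rintro rfl; simp at hde; exact hf hde
  have hmem : ∀ a r : R, r ∈ Ideal.torsionOf R (R ⧸ f) (Ideal.Quotient.mk f a) ↔ r * a ∈ f := by
    intro a r
    rw [Ideal.mem_torsionOf_iff, Algebra.smul_def, Ideal.Quotient.algebraMap_eq, ← map_mul,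
      Ideal.Quotient.eq_zero_iff_mem]
  have hann : ∀ (d' e' : Ideal R) (a : R), f = d' * e' → f ⊔ Ideal.span {a} = e' →
      Ideal.torsionOf R (R ⧸ f) (Ideal.Quotient.mk f a) = d' := by
    intro d' e' a h1 h2
    have he' : e' ≠ 0 := by rintro rfl; simp at h1; exact hf h1
    ext r
    rw [hmem]
    constructor
    · intro hr
      have : Ideal.span {r} * e' ≤ d' * e' := by
        rw [← h1, ← h2, Ideal.mul_sup, sup_le_iff]
        refine ⟨Ideal.mul_le_right, ?_⟩
        rw [Ideal.span_singleton_mul_span_singleton, Ideal.span_singleton_le_iff_mem]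
        exact hr
      rw [← Ideal.dvd_iff_le] at this
      have := (mul_dvd_mul_iff_right he').1 this
      rw [Ideal.dvd_iff_le] at this
      exact this (Ideal.mem_span_singleton_self r)
    · intro hr
      rw [h1]
      refine Ideal.mul_mem_mul hr ?_
      rw [← h2]
      exact Ideal.mem_sup_right (Ideal.mem_span_singleton_self a)
  have hgen : ∀ a : R, Ideal.torsionOf R (R ⧸ f) (Ideal.Quotient.mk f a) = d →
      f ⊔ Ideal.span {a} = e := by
    intro a ha
    obtain ⟨d', h⟩ : (f ⊔ Ideal.span {a}) ∣ f := Ideal.dvd_iff_le.2 le_sup_left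
    have := hann d' _ a (h.trans (mul_comm _ _)) rfl
    rw [ha] at this
    subst this
    rw [mul_comm] at h
    exact mul_left_cancel₀ hd0 (h.symm.trans hde)
  have hfe : f ≤ e := by rw [hde]; exact Ideal.mul_le_right
  obtain ⟨y, hy⟩ := IsDedekindDomain.exists_sup_span_eq hfe hf
  have hyd := hann d e y hde hy
  have hk : ∀ r, r * y ∈ f ↔ r ∈ d := fun r => by rw [← hyd, hmem]
  have hsub : ∀ a b : R, f ⊔ Ideal.span {a} = e → f ⊔ Ideal.span {b} = e →
      ∃ r, r * b - a ∈ f := by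
    intro a b ha hb
    have : a ∈ f ⊔ Ideal.span {b} := by
      rw [hb, ← ha]; exact Ideal.mem_sup_right (Ideal.mem_span_singleton_self a)
    obtain ⟨u, hu, v, hv, huv⟩ := Submodule.mem_sup.1 this
    obtain ⟨r, rfl⟩ := Ideal.mem_span_singleton'.1 hv
    refine ⟨r, ?_⟩
    have : r * b - a = -u := by rw [← huv]; ring
    rw [this]; exact f.neg_mem hu
  let φ : (R ⧸ d) →ₗ[R] (R ⧸ f) := Submodule.liftQ d
    (LinearMap.toSpanSingleton R (R ⧸ f) (Ideal.Quotient.mk f y)) (by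
      intro r hr
      rw [LinearMap.mem_ker, LinearMap.toSpanSingleton_apply, ← Ideal.mem_torsionOf_iff, hyd]
      exact hr)
  have hφ : ∀ r, φ (Ideal.Quotient.mk d r) = Ideal.Quotient.mk f (r * y) := fun r => rfl
  have hinj : Function.Injective φ := by
    rw [injective_iff_map_eq_zero]
    intro x hx
    obtain ⟨r, rfl⟩ := Ideal.Quotient.mk_surjective x
    rw [hφ, Ideal.Quotient.eq_zero_iff_mem, hk] at hx
    exact Ideal.Quotient.eq_zero_iff_mem.2 hx
  have hinj' : Function.Injective (fun u : (R ⧸ d)ˣ => φ u) :=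
    hinj.comp Units.val_injective
  rw [← Nat.card_range_of_injective hinj']
  refine Nat.card_congr (Equiv.setCongr (s := {x | Ideal.torsionOf R (R ⧸ f) x = d}) ?_)
  ext x
  obtain ⟨a, rfl⟩ := Ideal.Quotient.mk_surjective x
  simp only [Set.mem_ofPred_eq, Set.mem_range]
  constructor
  · intro ha
    obtain ⟨r, hr⟩ := hsub a y (hgen a ha) hy
    obtain ⟨s, hs⟩ := hsub y a hy (hgen a ha)
    have h1 : Ideal.Quotient.mk d r * Ideal.Quotient.mk d s = 1 := by
      rw [← map_mul, ← map_one (Ideal.Quotient.mk d), Ideal.Quotient.eq, ← hk]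
      have : (r * s - 1) * y = s * (r * y - a) + (s * a - y) := by ring
      rw [this]
      exact f.add_mem (f.mul_mem_left _ hr) hs
    refine ⟨Units.mkOfMulEqOne _ _ h1, ?_⟩
    rw [Units.val_mkOfMulEqOne, hφ, Ideal.Quotient.eq]
    exact hr
  · rintro ⟨u, hu⟩
    obtain ⟨r, hr⟩ := Ideal.Quotient.mk_surjective (u : R ⧸ d)
    obtain ⟨s, hs⟩ := Ideal.Quotient.mk_surjective ((u⁻¹ : (R ⧸ d)ˣ) : R ⧸ d)
    have h1 : s * r - 1 ∈ d := by
      rw [← Ideal.Quotient.eq, map_mul, hr, hs, map_one, Units.inv_mul]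
    rw [← hu, ← hr, hφ]
    ext t
    rw [hmem, ← mul_assoc, hk]
    constructor
    · intro ht
      have : t = s * (t * r) - t * (s * r - 1) := by ring
      rw [this]
      exact d.sub_mem (d.mul_mem_left _ ht) (d.mul_mem_left _ h1)
    · intro ht
      exact d.mul_mem_right _ ht

/-- **Statement 15 (Euler's formula for number fields).** For every nonzero integral
ideal `f` of `𝓞 K`, the absolute norm satisfies
`N(f) = |𝓞 K / f| = Σ_{d ∣ f} φ_K(d)`, where the sum ranges over the (finitely many)
nonzero integral ideals `d` dividing `f` and `φ_K(d) = |(𝓞 K / d)ˣ|`. -/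
theorem absNorm_eq_sum_totient (K : Type*) [Field K] [NumberField K]
    (f : Ideal (𝓞 K)) (hf : f ≠ 0) :
    Ideal.absNorm f = Nat.card (𝓞 K ⧸ f) ∧
    Nat.card (𝓞 K ⧸ f) =
      ∑ᶠ d ∈ {d : Ideal (𝓞 K) | d ≠ 0 ∧ d ∣ f}, Nat.card ((𝓞 K ⧸ d)ˣ) := by
  classical
  refine ⟨rfl, ?_⟩
  have hfin : {d : Ideal (𝓞 K) | d ≠ 0 ∧ d ∣ f}.Finite := by
    have : Finite {d : Ideal (𝓞 K) // d ∣ f} :=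
      (UniqueFactorizationMonoid.fintypeSubtypeDvd f hf).finite
    exact (show {d : Ideal (𝓞 K) | d ∣ f}.Finite from this).subset fun d hd => hd.2
  haveI : Finite (𝓞 K ⧸ f) := Ideal.finiteQuotientOfFreeOfNeBot f hf
  haveI := Fintype.ofFinite (𝓞 K ⧸ f)
  rw [finsum_mem_eq_finite_toFinset_sum _ hfin, Nat.card_eq_fintype_card, ← Finset.card_univ,
    Finset.card_eq_sum_card_fiberwise (f := fun x => Ideal.torsionOf (𝓞 K) (𝓞 K ⧸ f) x)
      (t := hfin.toFinset)]
  · refine Finset.sum_congr rfl fun d hd => ?_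
    obtain ⟨-, e, he⟩ := hfin.mem_toFinset.1 hd
    rw [← aux_fiber f d e hf he, Nat.card_eq_fintype_card, Fintype.card_subtype]
  · intro x _
    obtain ⟨a, rfl⟩ := Ideal.Quotient.mk_surjective x
    have hdvd : Ideal.torsionOf (𝓞 K) (𝓞 K ⧸ f) (Ideal.Quotient.mk f a) ∣ f := by
      rw [Ideal.dvd_iff_le]
      intro r hr
      rw [Ideal.mem_torsionOf_iff, Algebra.smul_def, Ideal.Quotient.algebraMap_eq, ← map_mul,
        Ideal.Quotient.eq_zero_iff_mem]
      exact f.mul_mem_right _ hr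
    simp only [Finset.mem_coe, Set.Finite.mem_toFinset, Set.mem_ofPred_eq]
    exact ⟨ne_zero_of_dvd_ne_zero hf hdvd, hdvd⟩
end

section
/- Let f be a nonzero integral ideal of O_K and let d be a nonzero integral ideal dividing f. Then the number of residue classes x ∈ O_K/f such that the ideal generated by any (equivalently, some) lift of x together with f has greatest common divisor d (i.e. (lift of x)·O_K + f = d) equals φ_K(f/d) = |(O_K/(f/d))^×|, where f/d is the nonzero integral ideal e with d·e = f. -/
open NumberField

/-- **Statement 17.** Let `f` be a nonzero integral ideal of `𝓞 K` and `d` a nonzero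
ideal dividing `f`, say `d·e = f` (so `e = f/d`).  The number of residue classes
`x ∈ 𝓞 K / f` such that the ideal generated by any lift of `x` together with `f` has
gcd `d` (i.e. `(lift of x)·𝓞 K + f = d`) equals `φ_K(f/d) = |(𝓞 K /(f/d))ˣ|`. -/
theorem card_residues_with_gcd (K : Type*) [Field K] [NumberField K]
    (d e f : Ideal (𝓞 K)) (hd : d ≠ 0) (hf : f ≠ 0) (hde : d * e = f) :
    Nat.card {x : 𝓞 K ⧸ f //
        ∀ y : 𝓞 K, Ideal.Quotient.mk f y = x → Ideal.span {y} + f = d} =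
      Nat.card ((𝓞 K ⧸ e)ˣ) := by
  have hfd : f ≤ d := hde ▸ Ideal.mul_le_left
  obtain ⟨a, ha⟩ := IsDedekindDomain.exists_sup_span_eq hfd hf
  have had : a ∈ d := by
    rw [← ha]
    exact Ideal.mem_sup_right (Ideal.mem_span_singleton_self a)
  have key : ∀ r, a * r ∈ f ↔ r ∈ e := by
    intro r
    constructor
    · intro h
      have h1 : d * Ideal.span {r} ≤ d * e := by
        rw [hde]
        conv_lhs => rw [← ha]
        rw [Ideal.sup_mul]
        refine sup_le Ideal.mul_le_left ?_
        rw [Ideal.span_singleton_mul_span_singleton, Ideal.span_singleton_le_iff_mem]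
        exact h
      rw [← Ideal.dvd_iff_le, mul_dvd_mul_iff_left hd, Ideal.dvd_iff_le,
        Ideal.span_singleton_le_iff_mem] at h1
      exact h1
    · intro h
      rw [← hde]
      exact Ideal.mul_mem_mul had h
  have mem_iff : ∀ y x : 𝓞 K, x ∈ Ideal.span {y} + f ↔ ∃ s, x - y * s ∈ f := by
    intro y x
    rw [Ideal.add_eq_sup, Ideal.mem_span_singleton_sup]
    constructor
    · rintro ⟨s, b, hb, rfl⟩
      exact ⟨s, by convert hb using 1; ring⟩
    · rintro ⟨s, hs⟩
      exact ⟨s, _, hs, by ring⟩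
  have cond : ∀ r s : 𝓞 K, r * s - 1 ∈ e → ∀ y : 𝓞 K,
      Ideal.Quotient.mk f y = Ideal.Quotient.mk f (a * r) → Ideal.span {y} + f = d := by
    intro r s hrs y hy
    rw [Ideal.Quotient.eq] at hy
    apply le_antisymm
    · rw [Ideal.add_eq_sup]
      refine sup_le ?_ hfd
      rw [Ideal.span_singleton_le_iff_mem]
      have := d.add_mem (hfd hy) (d.mul_mem_right r had)
      simpa using this
    · rw [← ha]
      refine sup_le (by rw [Ideal.add_eq_sup]; exact le_sup_right) ?_
      rw [Ideal.span_singleton_le_iff_mem, mem_iff]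
      refine ⟨s, ?_⟩
      have h1 := (key _).2 hrs
      have h2 := f.mul_mem_right s hy
      have h3 := f.neg_mem (f.add_mem h1 h2)
      convert h3 using 1
      ring
  have lift : ∀ x : 𝓞 K ⧸ e, Ideal.Quotient.mk e (Quotient.out x) = x :=
    fun x => Quotient.out_eq x
  symm
  let g : (𝓞 K ⧸ e)ˣ → {x : 𝓞 K ⧸ f //
        ∀ y : 𝓞 K, Ideal.Quotient.mk f y = x → Ideal.span {y} + f = d} := fun u =>
    ⟨Ideal.Quotient.mk f (a * Quotient.out u.val),
      cond _ (Quotient.out (u⁻¹).val) (by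
        rw [← Ideal.Quotient.eq, map_mul, lift, lift, map_one, Units.mul_inv])⟩
  refine Nat.card_eq_of_bijective g ⟨?_, ?_⟩
  · intro u v huv
    have h := congrArg Subtype.val huv
    simp only [g] at h
    rw [Ideal.Quotient.eq, ← mul_sub, key, ← Ideal.Quotient.eq, lift, lift] at h
    exact Units.ext h
  · rintro ⟨x, hx⟩
    obtain ⟨y, rfl⟩ := Ideal.Quotient.mk_surjective x
    have hy := hx y rfl
    have hyd : y ∈ Ideal.span {a} + f := by
      rw [Ideal.add_eq_sup, sup_comm, ha, ← hy, Ideal.add_eq_sup]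
      exact Ideal.mem_sup_left (Ideal.mem_span_singleton_self y)
    obtain ⟨r, hr⟩ := (mem_iff _ _).1 hyd
    obtain ⟨s, hs⟩ := (mem_iff y a).1 (hy ▸ had)
    have hrs : r * s - 1 ∈ e := by
      rw [← key]
      have h3 := f.neg_mem (f.add_mem hs (f.mul_mem_right s hr))
      convert h3 using 1
      ring
    have hu : Ideal.Quotient.mk e r * Ideal.Quotient.mk e s = 1 := by
      rw [← map_mul, ← map_one (Ideal.Quotient.mk e), Ideal.Quotient.eq]
      exact hrs
    refine ⟨Units.mkOfMulEqOne _ _ hu, Subtype.ext ?_⟩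
    simp only [g]
    have h4 : Quotient.out (Ideal.Quotient.mk e r) - r ∈ e := by
      rw [← Ideal.Quotient.eq, lift]
    rw [Ideal.Quotient.eq]
    have h5 := f.sub_mem ((key _).2 h4) hr
    convert h5 using 1
    simp only [Units.val_mkOfMulEqOne]
    ring
end

section
/- Let L be a finite Galois extension of a field K with Galois group G = Gal(L/K), and let Y be a finite set equipped with an action of G. Then the L-linear span, inside the L-vector space of all functions Y → L, of the set of G-equivariant functions (i.e. functions f : Y → L with f(g·y) = g(f(y)) for all g ∈ G and y ∈ Y) is the space of all functions Y → L. -/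
/-- **Statement 18.** Let `L/K` be a finite Galois extension with Galois group
`G = Gal(L/K)` and let `Y` be a finite `G`-set.  Then the `L`-linear span, inside the
`L`-vector space of all functions `Y → L`, of the `G`-equivariant functions
(those `f : Y → L` with `f (g • y) = g (f y)` for all `g ∈ G`, `y ∈ Y`) is the space of
all functions `Y → L`. -/
theorem span_equivariant_functions_eq_top
    (K L : Type*) [Field K] [Field L] [Algebra K L] [FiniteDimensional K L]
    [IsGalois K L] (Y : Type*) [Finite Y] [MulAction (L ≃ₐ[K] L) Y] :
    Submodule.span L
        {f : Y → L | ∀ (g : L ≃ₐ[K] L) (y : Y), f (g • y) = g (f y)} = ⊤ := by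
  classical
  haveI := Fintype.ofFinite Y
  by_contra hne
  obtain ⟨φ, hφ, hle⟩ := Submodule.exists_le_ker_of_lt_top _ (lt_top_iff_ne_top.mpr hne)
  apply hφ
  apply LinearMap.pi_ext'
  intro y₀
  ext
  -- Dedekind independence of the elements of the Galois group
  have hli : LinearIndependent L (fun g : L ≃ₐ[K] L => (fun x : L => g x)) := by
    exact (linearIndependent_monoidHom L L).comp
      (fun g : L ≃ₐ[K] L => ((g : L →* L)))
      (fun g h hgh => by
        ext x
        exact DFunLike.congr_fun hgh x)
  have key := Fintype.linearIndependent_iff.mp hli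
    (fun g => φ (Pi.single (g • y₀) 1)) ?_ 1
  · simpa using key
  · funext a
    have hmem : (∑ g : L ≃ₐ[K] L, g a • (Pi.single (g • y₀) (1 : L) : Y → L)) ∈
        {f : Y → L | ∀ (g : L ≃ₐ[K] L) (y : Y), f (g • y) = g (f y)} := by
      intro h y
      simp only [Finset.sum_apply, Pi.smul_apply, map_sum, smul_eq_mul, map_mul]
      rw [← Equiv.sum_comp (Equiv.mulLeft h)]
      refine Finset.sum_congr rfl fun g _ => ?_
      by_cases hy : y = g • y₀
      · subst hy
        simp [mul_smul]
      · have : h • y ≠ (h * g) • y₀ := by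
          rw [mul_smul]
          exact fun e => hy (MulAction.injective h e)
        simp [Pi.single_eq_of_ne hy, Pi.single_eq_of_ne this]
    have h0 := hle (Submodule.subset_span hmem)
    rw [LinearMap.mem_ker, map_sum] at h0
    simpa [Finset.sum_apply, mul_comm] using h0
end
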